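/- arXiv:2506.15730 — 4 statements merged into one kernel-verified Lean document; each statement's English description precedes it below -/
import Mathlib

section
/- Assume ∂_i a^i = 0 and B^{ij} symmetric. Let φ(x,t) > 0 be a smooth solution of the direct-time Fokker–Planck equation ∂φ/∂t = −∂_i(a^i φ) + ∂_i(B^{ij} ∂_j φ), let ψ(x,t) > 0 be a smooth solution of the reverse-time Fokker–Planck equation ∂ψ/∂t = −∂_i(a^i ψ) − ∂_i(B^{ij} ∂_j ψ), and let C ≠ 0 be a constant. Then f := φψ/C satisfies, pointwise, the conservative equation ∂f/∂t + ∂_i(a^i f) = ∂_i( B^{ij} f ( ∂_j ln φ − ∂_j ln ψ ) ). -/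
/-! The proof is the product rule at a fixed time. Write `P φ i = ∑ j, B^{ij} ∂_j φ` for the flux.
Since `∂_j ln φ = ∂_j φ / φ`, the vector field on the right-hand side is `(ψ P φ - φ P ψ) / C`.
In its divergence the first-order cross terms `∂_i ψ B^{ij} ∂_j φ - ∂_i φ B^{ij} ∂_j ψ` cancel by
the symmetry of `B` (`sum_cross_eq`), which leaves `(ψ ∂_i P φ i - φ ∂_i P ψ i) / C`. On the
left-hand side the two evolution equations produce the same expression, and the drift terms cancel
because `∂_i a^i = 0` turns the sum `∂_i (a^i u)` into the derivation `a^i ∂_i u` (`sum_pd_drift`). -/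

open MeasureTheory

/-- Partial derivative `∂_i f` of a function on `ℝⁿ`. -/
noncomputable def pd {n : ℕ} (i : Fin n) (f : (Fin n → ℝ) → ℝ) (x : Fin n → ℝ) : ℝ :=
  fderiv ℝ f x (Pi.single i 1)

theorem pd_mul {n : ℕ} (i : Fin n) {f g : (Fin n → ℝ) → ℝ} {x : Fin n → ℝ}
    (hf : DifferentiableAt ℝ f x) (hg : DifferentiableAt ℝ g x) :
    pd i (fun y => f y * g y) x = f x * pd i g x + g x * pd i f x := by
  simp [pd, fderiv_fun_mul hf hg]

theorem pd_div_const {n : ℕ} (i : Fin n) {f : (Fin n → ℝ) → ℝ} {x : Fin n → ℝ}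
    (hf : DifferentiableAt ℝ f x) (C : ℝ) :
    pd i (fun y => f y / C) x = pd i f x / C := by
  simp only [div_eq_mul_inv]
  simp [pd, fderiv_mul_const hf, mul_comm]

theorem pd_sub {n : ℕ} (i : Fin n) {f g : (Fin n → ℝ) → ℝ} {x : Fin n → ℝ}
    (hf : DifferentiableAt ℝ f x) (hg : DifferentiableAt ℝ g x) :
    pd i (fun y => f y - g y) x = pd i f x - pd i g x := by
  simp [pd, fderiv_fun_sub hf hg]

theorem pd_log {n : ℕ} (i : Fin n) {f : (Fin n → ℝ) → ℝ} {x : Fin n → ℝ}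
    (hf : DifferentiableAt ℝ f x) (h0 : f x ≠ 0) :
    pd i (fun y => Real.log (f y)) x = pd i f x / f x := by
  simp [pd, fderiv.log hf h0, div_eq_inv_mul]

theorem differentiable_pd {n : ℕ} (i : Fin n) {f : (Fin n → ℝ) → ℝ}
    (hf : ContDiff ℝ (⊤ : ℕ∞) f) : Differentiable ℝ (pd i f) := by
  have h : ContDiff ℝ 1 (fderiv ℝ f) := hf.fderiv_right (by norm_cast)
  exact (h.differentiable (by norm_num)).clm_apply (differentiable_const _)

/-- A divergence-free drift acts on densities as the derivation `a^i ∂_i`. -/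
theorem sum_pd_drift {n : ℕ} {a : (Fin n → ℝ) → Fin n → ℝ} {u : (Fin n → ℝ) → ℝ} {x : Fin n → ℝ}
    (ha : ∀ i, DifferentiableAt ℝ (fun y => a y i) x) (hu : DifferentiableAt ℝ u x)
    (hdiv : ∑ i, pd i (fun y => a y i) x = 0) :
    ∑ i, pd i (fun y => a y i * u y) x = ∑ i, a x i * pd i u x := by
  simp_rw [fun i => pd_mul i (ha i) hu]
  rw [Finset.sum_add_distrib, ← Finset.mul_sum, hdiv, mul_zero, add_zero]

/-- A symmetric matrix defines a symmetric bilinear form. With `u = ∇φ` and `v = ∇ψ` this cancels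
the first-order cross terms. -/
theorem sum_cross_eq {n : ℕ} {B : Fin n → Fin n → ℝ} (hB : ∀ i j, B i j = B j i)
    (u v : Fin n → ℝ) :
    ∑ i, u i * ∑ j, B i j * v j = ∑ i, v i * ∑ j, B i j * u j := by
  simp_rw [Finset.mul_sum]
  rw [Finset.sum_comm]
  refine Finset.sum_congr rfl fun i _ => Finset.sum_congr rfl fun j _ => ?_
  rw [hB j i]
  ring

/-- With `∂_i a^i = 0` and `B^{ij}` symmetric, if `φ > 0` solves the
direct-time Fokker–Planck equation `∂φ/∂t = −∂_i(a^i φ) + ∂_i(B^{ij} ∂_j φ)`,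
`ψ > 0` solves the reverse-time Fokker–Planck equation
`∂ψ/∂t = −∂_i(a^i ψ) − ∂_i(B^{ij} ∂_j ψ)`, and `C ≠ 0` is a constant, then
`f := φψ/C` satisfies pointwise the conservative equation
`∂f/∂t + ∂_i(a^i f) = ∂_i( B^{ij} f ( ∂_j ln φ − ∂_j ln ψ ) )`. -/
theorem bridge_density_conservative_equation {n : ℕ}
    (a : ℝ → (Fin n → ℝ) → Fin n → ℝ)
    (B : ℝ → (Fin n → ℝ) → Fin n → Fin n → ℝ)
    (ha_smooth : ∀ i : Fin n, ContDiff ℝ (⊤ : ℕ∞) (fun q : ℝ × (Fin n → ℝ) => a q.1 q.2 i))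
    (hB_smooth : ∀ i j : Fin n, ContDiff ℝ (⊤ : ℕ∞) (fun q : ℝ × (Fin n → ℝ) => B q.1 q.2 i j))
    (hdiv : ∀ (t : ℝ) (x : Fin n → ℝ), ∑ i, pd i (fun y => a t y i) x = 0)
    (hBsymm : ∀ t x i j, B t x i j = B t x j i)
    (φ ψ : ℝ → (Fin n → ℝ) → ℝ)
    (hφ_smooth : ContDiff ℝ (⊤ : ℕ∞) (fun q : ℝ × (Fin n → ℝ) => φ q.1 q.2))
    (hψ_smooth : ContDiff ℝ (⊤ : ℕ∞) (fun q : ℝ × (Fin n → ℝ) => ψ q.1 q.2))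
    (hφ_pos : ∀ t x, 0 < φ t x)
    (hψ_pos : ∀ t x, 0 < ψ t x)
    (hFPφ : ∀ (t : ℝ) (x : Fin n → ℝ),
      deriv (fun s => φ s x) t =
        -(∑ i, pd i (fun y => a t y i * φ t y) x)
          + ∑ i, pd i (fun y => ∑ j, B t y i j * pd j (φ t) y) x)
    (hFPψ : ∀ (t : ℝ) (x : Fin n → ℝ),
      deriv (fun s => ψ s x) t =
        -(∑ i, pd i (fun y => a t y i * ψ t y) x)
          - ∑ i, pd i (fun y => ∑ j, B t y i j * pd j (ψ t) y) x)
    (C : ℝ) (hC : C ≠ 0) :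
    ∀ (t : ℝ) (x : Fin n → ℝ),
      deriv (fun s => φ s x * ψ s x / C) t
        + ∑ i, pd i (fun y => a t y i * (φ t y * ψ t y / C)) x
      = ∑ i, pd i (fun y => ∑ j, B t y i j * (φ t y * ψ t y / C) *
          (pd j (fun z => Real.log (φ t z)) y - pd j (fun z => Real.log (ψ t z)) y)) x := by
  intro t x
  have slice : ∀ {g : ℝ → (Fin n → ℝ) → ℝ},
      ContDiff ℝ (⊤ : ℕ∞) (fun q : ℝ × (Fin n → ℝ) => g q.1 q.2) → ContDiff ℝ (⊤ : ℕ∞) (g t) := fun h => h.comp (contDiff_prodMk_right t)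
  have hφc := slice hφ_smooth
  have hψc := slice hψ_smooth
  have hφd : Differentiable ℝ (φ t) := hφc.differentiable (by simp)
  have hψd : Differentiable ℝ (ψ t) := hψc.differentiable (by simp)
  have had : ∀ i, Differentiable ℝ (fun y => a t y i) := fun i =>
    (slice (g := fun t y => a t y i) (ha_smooth i)).differentiable (by simp)
  have hBd : ∀ i j, Differentiable ℝ (fun y => B t y i j) := fun i j =>
    (slice (g := fun t y => B t y i j) (hB_smooth i j)).differentiable (by simp)
  have hφt : DifferentiableAt ℝ (fun s => φ s x) t :=
    (hφ_smooth.comp (contDiff_prodMk_left x)).differentiable (by simp) t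
  have hψt : DifferentiableAt ℝ (fun s => ψ s x) t :=
    (hψ_smooth.comp (contDiff_prodMk_left x)).differentiable (by simp) t
  have hflux : ∀ {u : (Fin n → ℝ) → ℝ}, ContDiff ℝ (⊤ : ℕ∞) u → ∀ i,
      Differentiable ℝ (fun y => ∑ j, B t y i j * pd j u y) := fun hu i =>
    Differentiable.fun_sum fun j _ => (hBd i j).mul (differentiable_pd j hu)
  have htime : deriv (fun s => φ s x * ψ s x / C) t
      = (deriv (fun s => φ s x) t * ψ t x + φ t x * deriv (fun s => ψ s x) t) / C := by
    rw [deriv_div_const, deriv_fun_mul hφt hψt]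
  -- Positivity of `φ` and `ψ` enters only here, through `∂_j ln φ = ∂_j φ / φ`.
  have hfield : ∀ i, (fun y => ∑ j, B t y i j * (φ t y * ψ t y / C) *
      (pd j (fun z => Real.log (φ t z)) y - pd j (fun z => Real.log (ψ t z)) y))
      = fun y => (ψ t y * (∑ j, B t y i j * pd j (φ t) y)
          - φ t y * (∑ j, B t y i j * pd j (ψ t) y)) / C := by
    intro i
    funext y
    have h1 := (hφ_pos t y).ne'
    have h2 := (hψ_pos t y).ne'
    rw [Finset.mul_sum, Finset.mul_sum, ← Finset.sum_sub_distrib, Finset.sum_div]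
    refine Finset.sum_congr rfl fun j _ => ?_
    rw [pd_log j (hφd y) h1, pd_log j (hψd y) h2]
    field_simp
  have hdivfield : ∀ i, pd i (fun y => (ψ t y * (∑ j, B t y i j * pd j (φ t) y)
          - φ t y * (∑ j, B t y i j * pd j (ψ t) y)) / C) x
      = (ψ t x * pd i (fun y => ∑ j, B t y i j * pd j (φ t) y) x
          + (∑ j, B t x i j * pd j (φ t) x) * pd i (ψ t) x
          - (φ t x * pd i (fun y => ∑ j, B t y i j * pd j (ψ t) y) x
          + (∑ j, B t x i j * pd j (ψ t) x) * pd i (φ t) x)) / C := by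
    intro i
    have h1 := hflux hφc i x
    have h2 := hflux hψc i x
    rw [pd_div_const i (((hψd x).fun_mul h1).fun_sub ((hφd x).fun_mul h2)),
      pd_sub i ((hψd x).fun_mul h1) ((hφd x).fun_mul h2), pd_mul i (hψd x) h1, pd_mul i (hφd x) h2]
  have hfd : DifferentiableAt ℝ (fun y => φ t y * ψ t y / C) x := by
    simpa only [div_eq_mul_inv] using ((hφd x).fun_mul (hψd x)).mul_const C⁻¹
  have hdrift : ∑ i, pd i (fun y => a t y i * (φ t y * ψ t y / C)) x
      = (φ t x * ∑ i, a t x i * pd i (ψ t) x + ψ t x * ∑ i, a t x i * pd i (φ t) x) / C := by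
    rw [sum_pd_drift (fun i => had i x) hfd (hdiv t x),
      Finset.mul_sum, Finset.mul_sum, ← Finset.sum_add_distrib, Finset.sum_div]
    refine Finset.sum_congr rfl fun i _ => ?_
    rw [pd_div_const i ((hφd x).fun_mul (hψd x)), pd_mul i (hφd x) (hψd x)]
    ring
  have hcross := sum_cross_eq (hBsymm t x) (fun i => pd i (φ t) x) (fun i => pd i (ψ t) x)
  simp_rw [hfield, hdivfield]
  rw [htime, hdrift, hFPφ, hFPψ, sum_pd_drift (fun i => had i x) (hφd x) (hdiv t x),
    sum_pd_drift (fun i => had i x) (hψd x) (hdiv t x), ← Finset.sum_div,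
    Finset.sum_sub_distrib, Finset.sum_add_distrib, Finset.sum_add_distrib,
    ← Finset.mul_sum, ← Finset.mul_sum]
  simp_rw [mul_comm (∑ j, B t x _ j * _) (pd _ _ x)]
  rw [hcross]
  ring
end

section
/- Let η(x) > 0 and B^{ij}(x) be smooth, with B symmetric positive semidefinite. Let φ(x,t) > 0 be a smooth solution of the even-symmetric forward equation η ∂φ/∂t = ∂_i(η B^{ij} ∂_j φ) on ℝⁿ × (t₁,t₂). Assume for each t: all integrands below are integrable; d/dt ∫ η φ ln(e/φ) dx = −∫ η (∂φ/∂t) ln φ dx; and the spatial integral of the divergence ∂_i( η B^{ij} (∂_j φ) ln φ ) vanishes. Then dS_φ/dt = ∫_{ℝⁿ} (η/φ) B^{ij} (∂_i φ)(∂_j φ) dx ≥ 0; in particular the weighted direct-time entropy S_φ is nondecreasing in t. -/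
/-!
The divergence theorem step is the hypothesis that the flux integral vanishes, so the proof is the
pointwise product rule `∂_i (F_i log φ) = (∂_i F_i) log φ + F_i ∂_i φ / φ` with
`F_i = η B^{ij} ∂_j φ`. Summing over `i` and using the equation, the divergence equals
`η (∂φ/∂t) log φ + (η / φ) B^{ij} ∂_i φ ∂_j φ`. Both terms are integrable and the integral of their
sum is zero, so the dissipation integral equals `-∫ η (∂φ/∂t) log φ`, the derivative of the entropy.
Its integrand is nonnegative because `B` is positive semidefinite.
-/

open MeasureTheory

theorem pd_mul_log {n : ℕ} (i : Fin n) {F g : (Fin n → ℝ) → ℝ} {x : Fin n → ℝ}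
    (hF : DifferentiableAt ℝ F x) (hg : DifferentiableAt ℝ g x) (hx : g x ≠ 0) :
    pd i (fun y => F y * Real.log (g y)) x =
      pd i F x * Real.log (g x) + F x * (pd i g x / g x) := by
  unfold pd
  rw [(hF.hasFDerivAt.fun_mul (hg.hasFDerivAt.log hx)).fderiv]
  simp only [add_apply, smul_apply, smul_eq_mul]
  ring

theorem differentiable_pd_s9 {n : ℕ} (j : Fin n) {g : (Fin n → ℝ) → ℝ}
    (hg : ContDiff ℝ (⊤ : ℕ∞) g) : Differentiable ℝ (pd j g) := by
  have h := (contDiff_infty_iff_fderiv.1 hg).2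
  exact (h.differentiable (by simp)).clm_apply (differentiable_const _)

/-- For smooth `η > 0` and `B^{ij}` symmetric positive semidefinite,
a smooth positive solution `φ` of the even-symmetric forward equation
`η ∂φ/∂t = ∂_i(η B^{ij} ∂_j φ)` on `ℝⁿ × (t₁,t₂)` with integrability,
differentiation-under-the-integral and vanishing boundary-flux hypotheses
satisfies `dS_φ/dt = ∫ (η/φ) B^{ij} (∂_i φ)(∂_j φ) dx ≥ 0`, where
`S_φ(t) = ∫ η φ ln(e/φ) dx` is the weighted direct-time entropy. -/
theorem even_symmetric_forward_entropy_nondecreasing {n : ℕ}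
    (η : (Fin n → ℝ) → ℝ)
    (B : (Fin n → ℝ) → Fin n → Fin n → ℝ)
    (hη_smooth : ContDiff ℝ (⊤ : ℕ∞) η) (hη_pos : ∀ x, 0 < η x)
    (hB_smooth : ∀ i j : Fin n, ContDiff ℝ (⊤ : ℕ∞) (fun x => B x i j))
    (hBsymm : ∀ x i j, B x i j = B x j i)
    (hBpos : ∀ (x v : Fin n → ℝ), 0 ≤ ∑ i, ∑ j, v i * B x i j * v j)
    (t₁ t₂ : ℝ)
    (φ : ℝ → (Fin n → ℝ) → ℝ)
    (hφ_smooth : ContDiff ℝ (⊤ : ℕ∞) (fun q : ℝ × (Fin n → ℝ) => φ q.1 q.2))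
    (hφ_pos : ∀ t x, 0 < φ t x)
    (hFP : ∀ t ∈ Set.Ioo t₁ t₂, ∀ x : Fin n → ℝ,
      η x * deriv (fun s => φ s x) t =
        ∑ i, pd i (fun y => η y * ∑ j, B y i j * pd j (φ t) y) x)
    (hInt_ent : ∀ t ∈ Set.Ioo t₁ t₂,
      Integrable (fun x : Fin n → ℝ => η x * φ t x * Real.log (Real.exp 1 / φ t x)))
    (hInt_dt : ∀ t ∈ Set.Ioo t₁ t₂,
      Integrable (fun x : Fin n → ℝ =>
        η x * deriv (fun s => φ s x) t * Real.log (φ t x)))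
    (hInt_diss : ∀ t ∈ Set.Ioo t₁ t₂,
      Integrable (fun x : Fin n → ℝ =>
        (η x / φ t x) * ∑ i, ∑ j, B x i j * pd i (φ t) x * pd j (φ t) x))
    (hdiff : ∀ t ∈ Set.Ioo t₁ t₂,
      HasDerivAt (fun s => ∫ x : Fin n → ℝ, η x * φ s x * Real.log (Real.exp 1 / φ s x))
        (-(∫ x : Fin n → ℝ, η x * deriv (fun s => φ s x) t * Real.log (φ t x))) t)
    (hflux : ∀ t ∈ Set.Ioo t₁ t₂,
      (∫ x : Fin n → ℝ,
        ∑ i, pd i (fun y => η y * (∑ j, B y i j * pd j (φ t) y) * Real.log (φ t y)) x)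
        = 0) :
    ∀ t ∈ Set.Ioo t₁ t₂,
      deriv (fun s => ∫ x : Fin n → ℝ, η x * φ s x * Real.log (Real.exp 1 / φ s x)) t =
        (∫ x : Fin n → ℝ, (η x / φ t x) * ∑ i, ∑ j, B x i j * pd i (φ t) x * pd j (φ t) x)
      ∧ 0 ≤ (∫ x : Fin n → ℝ,
          (η x / φ t x) * ∑ i, ∑ j, B x i j * pd i (φ t) x * pd j (φ t) x) := by
  intro t ht
  have hφt : ContDiff ℝ (⊤ : ℕ∞) (φ t) :=
    hφ_smooth.comp (contDiff_const.prodMk contDiff_id)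
  have hη : Differentiable ℝ η := hη_smooth.differentiable (by simp)
  have hφd : Differentiable ℝ (φ t) := hφt.differentiable (by simp)
  have hF (i : Fin n) : Differentiable ℝ (fun y => η y * ∑ j, B y i j * pd j (φ t) y) :=
    hη.mul (Differentiable.fun_sum fun j _ =>
      ((hB_smooth i j).differentiable (by simp)).mul (differentiable_pd_s9 j hφt))
  have hdiv : ∀ x, ∑ i, pd i
        (fun y => η y * (∑ j, B y i j * pd j (φ t) y) * Real.log (φ t y)) x =
      η x * deriv (fun s => φ s x) t * Real.log (φ t x) +
        (η x / φ t x) * ∑ i, ∑ j, B x i j * pd i (φ t) x * pd j (φ t) x := by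
    intro x
    rw [hFP t ht x, Finset.sum_mul, Finset.mul_sum, ← Finset.sum_add_distrib]
    refine Finset.sum_congr rfl fun i _ => ?_
    rw [pd_mul_log i (hF i x) (hφd x) (hφ_pos t x).ne']
    congr 1
    have h : ∑ j, B x i j * pd i (φ t) x * pd j (φ t) x =
        pd i (φ t) x * ∑ j, B x i j * pd j (φ t) x := by
      rw [Finset.mul_sum]
      exact Finset.sum_congr rfl fun j _ => by ring
    rw [h]
    ring
  have hzero := hflux t ht
  simp_rw [hdiv] at hzero
  rw [integral_add (hInt_dt t ht) (hInt_diss t ht)] at hzero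
  refine ⟨?_, ?_⟩
  · rw [(hdiff t ht).deriv]
    linarith
  · refine integral_nonneg fun x => mul_nonneg (div_pos (hη_pos x) (hφ_pos t x)).le ?_
    refine (hBpos x fun i => pd i (φ t) x).trans_eq ?_
    exact Finset.sum_congr rfl fun i _ => Finset.sum_congr rfl fun j _ => by ring
end

section
/- Let η(x) > 0 and B^{ij}(x) be smooth, with B symmetric positive semidefinite. Let ψ(x,t) > 0 be a smooth solution of the even-symmetric backward equation −η ∂ψ/∂t = ∂_i(η B^{ij} ∂_j ψ) on ℝⁿ × (t₁,t₂). Assume for each t: all integrands below are integrable; d/dt ∫ η ψ ln(e/ψ) dx = −∫ η (∂ψ/∂t) ln ψ dx; and the spatial integral of the divergence ∂_i( η B^{ij} (∂_j ψ) ln ψ ) vanishes. Then dS_ψ/dt = −∫_{ℝⁿ} (η/ψ) B^{ij} (∂_i ψ)(∂_j ψ) dx ≤ 0; in particular the weighted reverse-time entropy S_ψ is nonincreasing in t (it increases backward in time). -/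
/-!
Put `F_i = η B^{ij} ∂_j ψ`. By the product rule and the backward equation,
`∂_i (F_i ln ψ) = (∂_i F_i) ln ψ + F_i ∂_i ψ / ψ
  = -η (∂ψ/∂t) ln ψ + (η/ψ) B^{ij} ∂_i ψ ∂_j ψ`
pointwise. The left side integrates to zero, so the derivative `-∫ η (∂ψ/∂t) ln ψ` of the entropy
equals minus the dissipation integral, whose integrand is nonnegative because `B ≥ 0`.
-/

open MeasureTheory

/-- For smooth `η > 0` and `B^{ij}` symmetric positive
semidefinite, a smooth positive solution `ψ` of the even-symmetric backward
equation `−η ∂ψ/∂t = ∂_i(η B^{ij} ∂_j ψ)` on `ℝⁿ × (t₁,t₂)` with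
integrability, differentiation-under-the-integral and vanishing boundary-flux
hypotheses satisfies `dS_ψ/dt = −∫ (η/ψ) B^{ij} (∂_i ψ)(∂_j ψ) dx ≤ 0`, where
`S_ψ(t) = ∫ η ψ ln(e/ψ) dx` is the weighted reverse-time entropy. -/
theorem even_symmetric_backward_entropy_nonincreasing {n : ℕ}
    (η : (Fin n → ℝ) → ℝ)
    (B : (Fin n → ℝ) → Fin n → Fin n → ℝ)
    (hη_smooth : ContDiff ℝ (⊤ : ℕ∞) η) (hη_pos : ∀ x, 0 < η x)
    (hB_smooth : ∀ i j : Fin n, ContDiff ℝ (⊤ : ℕ∞) (fun x => B x i j))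
    (hBsymm : ∀ x i j, B x i j = B x j i)
    (hBpos : ∀ (x v : Fin n → ℝ), 0 ≤ ∑ i, ∑ j, v i * B x i j * v j)
    (t₁ t₂ : ℝ)
    (ψ : ℝ → (Fin n → ℝ) → ℝ)
    (hψ_smooth : ContDiff ℝ (⊤ : ℕ∞) (fun q : ℝ × (Fin n → ℝ) => ψ q.1 q.2))
    (hψ_pos : ∀ t x, 0 < ψ t x)
    (hFP : ∀ t ∈ Set.Ioo t₁ t₂, ∀ x : Fin n → ℝ,
      -(η x * deriv (fun s => ψ s x) t) =
        ∑ i, pd i (fun y => η y * ∑ j, B y i j * pd j (ψ t) y) x)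
    (hInt_ent : ∀ t ∈ Set.Ioo t₁ t₂,
      Integrable (fun x : Fin n → ℝ => η x * ψ t x * Real.log (Real.exp 1 / ψ t x)))
    (hInt_dt : ∀ t ∈ Set.Ioo t₁ t₂,
      Integrable (fun x : Fin n → ℝ =>
        η x * deriv (fun s => ψ s x) t * Real.log (ψ t x)))
    (hInt_diss : ∀ t ∈ Set.Ioo t₁ t₂,
      Integrable (fun x : Fin n → ℝ =>
        (η x / ψ t x) * ∑ i, ∑ j, B x i j * pd i (ψ t) x * pd j (ψ t) x))
    (hdiff : ∀ t ∈ Set.Ioo t₁ t₂,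
      HasDerivAt (fun s => ∫ x : Fin n → ℝ, η x * ψ s x * Real.log (Real.exp 1 / ψ s x))
        (-(∫ x : Fin n → ℝ, η x * deriv (fun s => ψ s x) t * Real.log (ψ t x))) t)
    (hflux : ∀ t ∈ Set.Ioo t₁ t₂,
      (∫ x : Fin n → ℝ,
        ∑ i, pd i (fun y => η y * (∑ j, B y i j * pd j (ψ t) y) * Real.log (ψ t y)) x)
        = 0) :
    ∀ t ∈ Set.Ioo t₁ t₂,
      deriv (fun s => ∫ x : Fin n → ℝ, η x * ψ s x * Real.log (Real.exp 1 / ψ s x)) t =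
        -(∫ x : Fin n → ℝ, (η x / ψ t x) * ∑ i, ∑ j, B x i j * pd i (ψ t) x * pd j (ψ t) x)
      ∧ -(∫ x : Fin n → ℝ,
          (η x / ψ t x) * ∑ i, ∑ j, B x i j * pd i (ψ t) x * pd j (ψ t) x) ≤ 0 := by
  intro t ht
  have hψt : ContDiff ℝ (⊤ : ℕ∞) (ψ t) :=
    hψ_smooth.comp (contDiff_const.prodMk contDiff_id)
  have hψd : Differentiable ℝ (ψ t) := hψt.differentiable (by simp)
  have hηd : Differentiable ℝ η := hη_smooth.differentiable (by simp)
  have hF : ∀ i, Differentiable ℝ (fun y => η y * ∑ j, B y i j * pd j (ψ t) y) := fun i =>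
    hηd.mul (Differentiable.fun_sum fun j _ =>
      ((hB_smooth i j).differentiable (by simp)).mul (differentiable_pd j hψt))
  have key : ∀ x,
      ∑ i, pd i (fun y => η y * (∑ j, B y i j * pd j (ψ t) y) * Real.log (ψ t y)) x =
        -(η x * deriv (fun s => ψ s x) t * Real.log (ψ t x)) +
        (η x / ψ t x) * ∑ i, ∑ j, B x i j * pd i (ψ t) x * pd j (ψ t) x := by
    intro x
    rw [Finset.sum_congr rfl fun i _ =>
      pd_mul_log i (hF i x) (hψd x) (hψ_pos t x).ne', Finset.sum_add_distrib,
      ← Finset.sum_mul, ← hFP t ht x, neg_mul, Finset.mul_sum]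
    congr 1
    refine Finset.sum_congr rfl fun i _ => ?_
    have : ∑ j, B x i j * pd i (ψ t) x * pd j (ψ t) x =
        pd i (ψ t) x * ∑ j, B x i j * pd j (ψ t) x := by
      rw [Finset.mul_sum]
      exact Finset.sum_congr rfl fun j _ => by ring
    rw [this]
    ring
  have h0 := hflux t ht
  simp_rw [key] at h0
  rw [integral_add (hInt_dt t ht).fun_neg (hInt_diss t ht), integral_neg] at h0
  refine ⟨?_, neg_nonpos.mpr (integral_nonneg fun x => ?_)⟩
  · rw [(hdiff t ht).deriv]
    linarith
  · refine mul_nonneg (div_pos (hη_pos x) (hψ_pos t x)).le ?_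
    refine (hBpos x (fun i => pd i (ψ t) x)).trans_eq ?_
    exact Finset.sum_congr rfl fun i _ => Finset.sum_congr rfl fun j _ => by ring
end

section
/- Let a^i(x,t) and b^{ik}(x,t) be smooth with ∂_i b^{ik} = 0 (for each k) and ∂_i a^i = 0, set B^{ij} = (1/2) Σ_k b^{ik} b^{jk}, and define the time-reversed coefficients ā^i = −a^i, b̄^{ik} = −b^{ik}. Then for every twice continuously differentiable u(x): −∂_i(ā^i u) + ∂_i( (1/2) b̄^{ik} ∂_j( b̄^{jk} u ) ) = a^i ∂_i u + b^{ik} ∂_i( (1/2) b^{jk} ∂_j u ). That is, the Stratonovich Fokker–Planck (forward) operator built from the antisymmetrically reversed coefficients coincides with the Stratonovich backward operator built from the original coefficients, so under the odd-symmetric conditions the reverse-time forward equation coincides with the direct-time backward equation. -/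
/-!
For a differentiable vector field `c` with `∂_i c^i = 0`, the Leibniz rule gives
`∂_i (c^i v) = c^i ∂_i v` for every differentiable `v` (`sum_pd_mul_of_div_free`).
The drift terms agree by this identity applied to `ā`. In the diffusion term the two sign
changes cancel, and the identity is used twice for each noise index `k`, both times with a
column of `b` (up to sign): inside, with `v = u`, and outside, with `v = (1/2) b^{jk} ∂_j u`,
which is `C¹` because `u` is `C²`.
-/

open MeasureTheory

/-- The Leibniz rule for the divergence of `c v`, whose term `v ∂_i c^i` vanishes:
`∂_i (c^i v) = c^i ∂_i v` at a point where `c` has zero divergence. -/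
theorem sum_pd_mul_of_div_free {n : ℕ} {c : (Fin n → ℝ) → Fin n → ℝ}
    {v : (Fin n → ℝ) → ℝ} {x : Fin n → ℝ}
    (hc : ∀ i, DifferentiableAt ℝ (fun y => c y i) x) (hv : DifferentiableAt ℝ v x)
    (hdiv : ∑ i, pd i (fun y => c y i) x = 0) :
    ∑ i, pd i (fun y => c y i * v y) x = ∑ i, c x i * pd i v x := by
  have h : ∀ i, pd i (fun y => c y i * v y) x
      = c x i * pd i v x + v x * pd i (fun y => c y i) x := by
    intro i
    simp only [pd]
    rw [fderiv_fun_mul (hc i) hv]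
    simp
  simp only [h, Finset.sum_add_distrib, ← Finset.mul_sum, hdiv, mul_zero, add_zero]

theorem pd_neg {n : ℕ} (i : Fin n) (f : (Fin n → ℝ) → ℝ) (x : Fin n → ℝ) :
    pd i (fun y => -f y) x = -pd i f x := by
  simp [pd, fderiv_fun_neg]

theorem pd_sum {n : ℕ} {κ : Type*} [Fintype κ] (i : Fin n) {f : κ → (Fin n → ℝ) → ℝ}
    {x : Fin n → ℝ} (hf : ∀ k, DifferentiableAt ℝ (f k) x) :
    pd i (fun y => ∑ k, f k y) x = ∑ k, pd i (f k) x := by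
  simp only [pd]
  rw [fderiv_fun_sum fun k _ => hf k]
  simp

theorem contDiff_pd {n : ℕ} (i : Fin n) {u : (Fin n → ℝ) → ℝ} (hu : ContDiff ℝ 2 u) :
    ContDiff ℝ 1 (pd i u) :=
  (hu.fderiv_right (m := 1) (by norm_num)).clm_apply contDiff_const

/-- Under the odd-symmetric conditions `∂_i a^i = 0`,
`∂_i b^{ik} = 0`, with time-reversed coefficients `ā^i = −a^i`,
`b̄^{ik} = −b^{ik}`, for every `C²` function `u`:
`−∂_i(ā^i u) + ∂_i((1/2) b̄^{ik} ∂_j(b̄^{jk} u)) = a^i ∂_i u + b^{ik} ∂_i((1/2) b^{jk} ∂_j u)`,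
i.e. the Stratonovich forward operator built from the antisymmetrically
reversed coefficients coincides with the Stratonovich backward operator built
from the original coefficients. -/
theorem stratonovich_reversed_forward_eq_backward_operator {n : ℕ}
    (a : (Fin n → ℝ) → Fin n → ℝ)
    (b : (Fin n → ℝ) → Fin n → Fin n → ℝ)
    (ha_smooth : ∀ i : Fin n, ContDiff ℝ (⊤ : ℕ∞) (fun x => a x i))
    (hb_smooth : ∀ i k : Fin n, ContDiff ℝ (⊤ : ℕ∞) (fun x => b x i k))
    (ha_div : ∀ x : Fin n → ℝ, ∑ i, pd i (fun y => a y i) x = 0)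
    (hb_div : ∀ (k : Fin n) (x : Fin n → ℝ), ∑ i, pd i (fun y => b y i k) x = 0)
    (abar : (Fin n → ℝ) → Fin n → ℝ)
    (bbar : (Fin n → ℝ) → Fin n → Fin n → ℝ)
    (habar : ∀ x i, abar x i = -(a x i))
    (hbbar : ∀ x i k, bbar x i k = -(b x i k))
    (u : (Fin n → ℝ) → ℝ) (hu : ContDiff ℝ 2 u) :
    ∀ x : Fin n → ℝ,
      -(∑ i, pd i (fun y => abar y i * u y) x)
        + ∑ i, pd i (fun y =>
            (1 / 2) * ∑ k, bbar y i k * ∑ j, pd j (fun z => bbar z j k * u z) y) x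
      = ∑ i, a x i * pd i u x
        + ∑ i, ∑ k, b x i k * pd i (fun y => (1 / 2) * ∑ j, b y j k * pd j u y) x := by
  intro x
  obtain rfl : abar = fun x i => -a x i := by
    funext x i
    exact habar x i
  obtain rfl : bbar = fun x i k => -b x i k := by
    funext x i k
    exact hbbar x i k
  have ha : ∀ i, Differentiable ℝ (fun y => a y i) :=
    fun i => (ha_smooth i).differentiable (by simp)
  have hb : ∀ i k, Differentiable ℝ (fun y => b y i k) :=
    fun i k => (hb_smooth i k).differentiable (by simp)
  have hud : Differentiable ℝ u := hu.differentiable (by norm_num)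
  have hw : ∀ k, Differentiable ℝ (fun y => (1 / 2) * ∑ j, b y j k * pd j u y) := by
    intro k
    refine Differentiable.const_mul (Differentiable.fun_sum fun j _ => ?_) _
    exact (hb j k).mul ((contDiff_pd j hu).differentiable (by norm_num))
  have hdrift : ∑ i, pd i (fun y => -a y i * u y) x = ∑ i, -a x i * pd i u x :=
    sum_pd_mul_of_div_free (c := fun y i => -a y i) (fun i => (ha i).neg x) (hud x)
      (by simp only [pd_neg, Finset.sum_neg_distrib, ha_div, neg_zero])
  have hinner : ∀ k y, ∑ j, pd j (fun z => -b z j k * u z) y = ∑ j, -b y j k * pd j u y :=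
    fun k y => sum_pd_mul_of_div_free (c := fun z j => -b z j k) (fun j => (hb j k).neg y)
      (hud y) (by simp only [pd_neg, Finset.sum_neg_distrib, hb_div, neg_zero])
  have hflux : ∀ i, (fun y => (1 / 2) * ∑ k, -b y i k * ∑ j, pd j (fun z => -b z j k * u z) y)
      = fun y => ∑ k, b y i k * ((1 / 2) * ∑ j, b y j k * pd j u y) := by
    intro i
    funext y
    rw [Finset.mul_sum]
    refine Finset.sum_congr rfl fun k _ => ?_
    rw [hinner]
    simp only [neg_mul, Finset.sum_neg_distrib]
    ring
  have houter : ∀ i, pd i (fun y => ∑ k, b y i k * ((1 / 2) * ∑ j, b y j k * pd j u y)) x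
      = ∑ k, pd i (fun y => b y i k * ((1 / 2) * ∑ j, b y j k * pd j u y)) x :=
    fun i => pd_sum i fun k => ((hb i k).mul (hw k)) x
  simp only [hflux, houter, hdrift]
  congr 1
  · simp
  · rw [Finset.sum_comm, Finset.sum_comm (f := fun i k => b x i k * _)]
    exact Finset.sum_congr rfl fun k _ =>
      sum_pd_mul_of_div_free (c := fun y i => b y i k) (fun i => hb i k x) (hw k x) (hb_div k x)
end
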